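/- Let K be a symmetric convex body in ℝⁿ and 0 < δ < vol(K). Then the convolution body K(δ) = {x ∈ ℝⁿ : vol(K ∩ (x + K)) ≥ δ} is strictly convex: its boundary contains no line segment. -/

import Mathlib

open MeasureTheory Set
open scoped Pointwise

/-!
Write `C x` for `K ∩ (x + K)` translated by `-x / 2`. Each `C x` is symmetric, and convexity of `K`
gives `a • C x + b • C y ⊆ C (a • x + b • y)`, so Brunn–Minkowski bounds `μ (C (a • x + b • y))`
below by `δ`. What is needed is strictness: for symmetric convex bodies `A ≠ B`,
`μ A ^ a * μ B ^ b < μ (a • A + b • B)`.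

For this, apply the Prékopa–Leindler inequality to `σ ∘ φ`, where `φ` is a linear functional
separating `A` from a point of `B` and `σ` is the logistic function. Since `σ t + σ (-t) = 1`, the
integral of `σ ∘ φ` over a symmetric set is half the measure of the set; since `σ` is strictly
log-concave, there is room to enlarge the integrand on the part of `B` beyond `A`.

If `C x = C y` with `x ≠ y`, then `C (a • x + b • y)` contains `C x` together with a nonzero
translate of it, so the strict inequality applies to this larger body and `C x` instead.
-/

section WeightedGeometricMean

variable {a b : ℝ}

theorem rpow_mul_rpow_self (ha : 0 ≤ a) (hb : 0 ≤ b) (hab : a + b = 1) (u : ENNReal) :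
    u ^ a * u ^ b = u := by
  rw [← ENNReal.rpow_add_of_nonneg _ _ ha hb, hab, ENNReal.rpow_one]

theorem div_rpow_mul_div_rpow (ha : 0 ≤ a) (hb : 0 ≤ b) {c : ENNReal} (hc : c ≠ 0)
    (hc_top : c ≠ ⊤) (d u v : ENNReal) :
    (u / c) ^ a * (v / d) ^ b = u ^ a * v ^ b / (c ^ a * d ^ b) := by
  rw [ENNReal.div_rpow_of_nonneg _ _ ha, ENNReal.div_rpow_of_nonneg _ _ hb,
    ENNReal.mul_div_mul_comm] <;> simp [ENNReal.rpow_eq_zero_iff, hc, hc_top]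

theorem rpow_mul_rpow_le_ofReal_mul_add_ofReal_mul (ha : 0 < a) (hb : 0 < b) (hab : a + b = 1)
    (u v : ENNReal) : u ^ a * v ^ b ≤ ENNReal.ofReal a * u + ENNReal.ofReal b * v := by
  have hconj : (1 / a).HolderConjugate (1 / b) :=
    Real.holderConjugate_iff.2 ⟨by rw [lt_div_iff₀ ha]; linarith, by simpa using hab⟩
  simpa [← ENNReal.rpow_mul, ha.ne', hb.ne', div_eq_mul_inv, mul_comm,
    ENNReal.ofReal_inv_of_pos, ha, hb] using ENNReal.young_inequality (u ^ a) (v ^ b) hconj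

end WeightedGeometricMean

section BrunnMinkowskiReal

variable {A B : Set ℝ}

theorem volume_add_volume_le_volume_add_of_isCompact (hA : IsCompact A) (hB : IsCompact B)
    (hA₀ : A.Nonempty) (hB₀ : B.Nonempty) : volume A + volume B ≤ volume (A + B) := by
  obtain ⟨k, hkA, hk⟩ := hA.exists_isGreatest hA₀
  obtain ⟨l, hlB, hl⟩ := hB.exists_isLeast hB₀
  have hdisj : AEDisjoint volume (l +ᵥ A) (k +ᵥ B) := by
    refine measure_mono_null (t := {k + l}) ?_ (by simp)
    rintro _ ⟨⟨x, hx, rfl⟩, ⟨y, hy, hxy⟩⟩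
    have := hk hx
    have := hl hy
    simp only [vadd_eq_add, mem_singleton_iff] at hxy ⊢
    linarith
  calc volume A + volume B = volume (l +ᵥ A) + volume (k +ᵥ B) := by
        simp only [measure_vadd]
    _ = volume ((l +ᵥ A) ∪ (k +ᵥ B)) :=
        (measure_union₀ (hB.vadd k).measurableSet.nullMeasurableSet hdisj).symm
    _ ≤ volume (A + B) := by
        refine measure_mono (union_subset ?_ (image_subset_image2_right hkA))
        rw [add_comm A B]
        exact image_subset_image2_right hlB

theorem volume_add_volume_le_volume_add (hA : MeasurableSet A) (hB : MeasurableSet B)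
    (hA₀ : A.Nonempty) (hB₀ : B.Nonempty) : volume A + volume B ≤ volume (A + B) := by
  obtain ⟨x, hx⟩ := hA₀
  obtain ⟨y, hy⟩ := hB₀
  rw [hA.measure_eq_iSup_isCompact, hB.measure_eq_iSup_isCompact]
  simp_rw [iSup_and']
  refine ENNReal.biSup_add_biSup_le' ⟨∅, by simp⟩ ⟨∅, by simp⟩ fun K hK L hL => ?_
  calc volume K + volume L ≤ volume (insert x K) + volume (insert y L) := by
        gcongr <;> exact subset_insert _ _
    _ ≤ volume (insert x K + insert y L) :=
        volume_add_volume_le_volume_add_of_isCompact (hK.2.insert x) (hL.2.insert y)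
          (insert_nonempty _ _) (insert_nonempty _ _)
    _ ≤ volume (A + B) :=
        measure_mono (add_subset_add (insert_subset hx hK.1) (insert_subset hy hL.1))

theorem ofReal_mul_volume_add_le_volume_smul_add_smul {a b : ℝ} (ha : 0 < a) (hb : 0 < b)
    (hA : MeasurableSet A) (hB : MeasurableSet B) (hA₀ : A.Nonempty) (hB₀ : B.Nonempty) :
    ENNReal.ofReal a * volume A + ENNReal.ofReal b * volume B ≤ volume (a • A + b • B) := by
  simpa [Measure.addHaar_smul, abs_of_pos ha, abs_of_pos hb] using
    volume_add_volume_le_volume_add (hA.const_smul₀ a) (hB.const_smul₀ b)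
      hA₀.smul_set hB₀.smul_set

end BrunnMinkowskiReal

section PrekopaLeindlerReal

theorem lintegral_eq_lintegral_measure_ofReal_lt {α : Type*} [MeasurableSpace α] {μ : Measure α}
    {f : α → ENNReal} (hf : Measurable f) (hf_top : ∀ᵐ x ∂μ, f x ≠ ⊤) :
    ∫⁻ x, f x ∂μ = ∫⁻ c in Ioi (0 : ℝ), μ {x | ENNReal.ofReal c < f x} := by
  calc ∫⁻ x, f x ∂μ = ∫⁻ x, ENNReal.ofReal (f x).toReal ∂μ :=
        lintegral_congr_ae (hf_top.mono fun x hx => (ENNReal.ofReal_toReal hx).symm)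
    _ = ∫⁻ c in Ioi (0 : ℝ), μ {x | c < (f x).toReal} :=
        lintegral_eq_lintegral_meas_lt μ (.of_forall fun _ => ENNReal.toReal_nonneg)
          hf.ennreal_toReal.aemeasurable
    _ = ∫⁻ c in Ioi (0 : ℝ), μ {x | ENNReal.ofReal c < f x} := by
        refine setLIntegral_congr_fun measurableSet_Ioi fun c hc =>
          measure_congr (hf_top.mono fun x hx => propext ?_)
        exact (ENNReal.ofReal_lt_iff_lt_toReal (le_of_lt hc) hx).symm

variable {a b : ℝ} {f g h : ℝ → ENNReal}

theorem ofReal_mul_lintegral_add_le_of_iSup_eq_one (ha : 0 < a) (hb : 0 < b) (hab : a + b = 1)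
    (hf : Measurable f) (hg : Measurable g) (hh : Measurable h)
    (hf₁ : ⨆ x, f x = 1) (hg₁ : ⨆ x, g x = 1)
    (hfgh : ∀ x y, f x ^ a * g y ^ b ≤ h (a • x + b • y)) :
    ENNReal.ofReal a * (∫⁻ x, f x) + ENNReal.ofReal b * (∫⁻ x, g x) ≤ ∫⁻ x, h x := by
  have ne_top_of_iSup : ∀ {u : ℝ → ENNReal}, ⨆ x, u x = 1 → ∀ᵐ x, u x ≠ ⊤ := fun hu =>
    .of_forall fun x => ne_top_of_le_ne_top ENNReal.one_ne_top ((le_iSup _ x).trans hu.le)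
  by_cases hh_top : ∫⁻ x, h x = ⊤
  · simp [hh_top]
  rw [lintegral_eq_lintegral_measure_ofReal_lt hf (ne_top_of_iSup hf₁),
    lintegral_eq_lintegral_measure_ofReal_lt hg (ne_top_of_iSup hg₁),
    lintegral_eq_lintegral_measure_ofReal_lt hh
      ((ae_lt_top hh hh_top).mono fun _ => LT.lt.ne),
    ← lintegral_const_mul' _ _ (by simp), ← lintegral_const_mul' _ _ (by simp),
    ← lintegral_add_left']
  · refine setLIntegral_mono' measurableSet_Ioi fun c _ => ?_
    rcases lt_or_ge (ENNReal.ofReal c) 1 with hc | hc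
    · refine (ofReal_mul_volume_add_le_volume_smul_add_smul ha hb
        (measurableSet_lt measurable_const hf) (measurableSet_lt measurable_const hg)
        (lt_iSup_iff.1 (hc.trans_eq hf₁.symm)) (lt_iSup_iff.1 (hc.trans_eq hg₁.symm))).trans
        (measure_mono ?_)
      rintro _ ⟨_, ⟨x, hx, rfl⟩, _, ⟨y, hy, rfl⟩, rfl⟩
      calc ENNReal.ofReal c = ENNReal.ofReal c ^ a * ENNReal.ofReal c ^ b :=
            (rpow_mul_rpow_self ha.le hb.le hab _).symm
        _ < f x ^ a * g y ^ b :=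
            ENNReal.mul_lt_mul (ENNReal.rpow_lt_rpow hx ha) (ENNReal.rpow_lt_rpow hy hb)
        _ ≤ h (a • x + b • y) := hfgh x y
    · have superlevel_eq_empty : ∀ {u : ℝ → ENNReal}, ⨆ x, u x = 1 →
          {x | ENNReal.ofReal c < u x} = ∅ := fun hu =>
        eq_empty_of_forall_notMem fun x hx =>
          (lt_of_lt_of_le hx ((le_iSup _ x).trans (hu.trans_le hc))).false
      simp [superlevel_eq_empty hf₁, superlevel_eq_empty hg₁]
  · refine (Antitone.measurable fun c d hcd => ?_).aemeasurable
    gcongr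

end PrekopaLeindlerReal

section PrekopaLeindler

theorem lintegral_rpow_mul_lintegral_rpow_le_of_iSup_ne_top {a b : ℝ} (ha : 0 < a) (hb : 0 < b)
    (hab : a + b = 1) {f g h : ℝ → ENNReal} (hf : Measurable f) (hg : Measurable g)
    (hh : Measurable h) (hf_top : ⨆ x, f x ≠ ⊤) (hg_top : ⨆ x, g x ≠ ⊤)
    (hfgh : ∀ x y, f x ^ a * g y ^ b ≤ h (a • x + b • y)) :
    (∫⁻ x, f x) ^ a * (∫⁻ x, g x) ^ b ≤ ∫⁻ x, h x := by
  rcases eq_or_ne (⨆ x, f x) 0 with hf₀ | hf₀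
  · simp [ENNReal.iSup_eq_zero.1 hf₀, ha]
  rcases eq_or_ne (⨆ x, g x) 0 with hg₀ | hg₀
  · simp [ENNReal.iSup_eq_zero.1 hg₀, hb]
  set F := ⨆ x, f x
  set G := ⨆ x, g x
  set M := F ^ a * G ^ b with hM
  have hM_top : M ≠ ⊤ := ENNReal.mul_ne_top (ENNReal.rpow_ne_top_of_nonneg ha.le hf_top)
    (ENNReal.rpow_ne_top_of_nonneg hb.le hg_top)
  have hM₀ : M ≠ 0 := by
    simp [hM, ENNReal.rpow_eq_zero_iff, hf₀, hg₀, hf_top, hg_top]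
  have lintegral_div : ∀ {u : ℝ → ENNReal} (c : ENNReal), Measurable u →
      ∫⁻ x, u x / c = (∫⁻ x, u x) / c := fun c hu => lintegral_mul_const _ hu
  refine (ENNReal.mul_le_mul_iff_left (ENNReal.inv_ne_zero.2 hM_top)
    (ENNReal.inv_ne_top.2 hM₀)).1 ?_
  simp only [← div_eq_mul_inv]
  calc (∫⁻ x, f x) ^ a * (∫⁻ x, g x) ^ b / M
      = (∫⁻ x, f x / F) ^ a * (∫⁻ x, g x / G) ^ b := by
        rw [lintegral_div F hf, lintegral_div G hg, div_rpow_mul_div_rpow ha.le hb.le hf₀ hf_top]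
    _ ≤ ENNReal.ofReal a * (∫⁻ x, f x / F) + ENNReal.ofReal b * (∫⁻ x, g x / G) :=
        rpow_mul_rpow_le_ofReal_mul_add_ofReal_mul ha hb hab _ _
    _ ≤ ∫⁻ x, h x / M := by
        refine ofReal_mul_lintegral_add_le_of_iSup_eq_one ha hb hab (hf.div_const F)
          (hg.div_const G) (hh.div_const M) ?_ ?_ fun x y => ?_
        · rw [← ENNReal.iSup_div, ENNReal.div_self hf₀ hf_top]
        · rw [← ENNReal.iSup_div, ENNReal.div_self hg₀ hg_top]
        · rw [div_rpow_mul_div_rpow ha.le hb.le hf₀ hf_top]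
          gcongr
          exact hfgh x y
    _ = (∫⁻ x, h x) / M := lintegral_div M hh

theorem tendsto_lintegral_min_natCast {α : Type*} [MeasurableSpace α] {μ : Measure α}
    {f : α → ENNReal} (hf : Measurable f) :
    Filter.Tendsto (fun N : ℕ => ∫⁻ x, min (f x) N ∂μ) Filter.atTop (nhds (∫⁻ x, f x ∂μ)) := by
  refine lintegral_tendsto_of_tendsto_of_monotone
    (fun N => (hf.min measurable_const).aemeasurable) (.of_forall fun x N N' hN => ?_)
    (.of_forall fun x => ?_)
  · dsimp only
    gcongr
  · simpa using (tendsto_const_nhds (x := f x)).min ENNReal.tendsto_nat_nhds_top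

/-- The Prékopa–Leindler inequality with weights `a` and `b`, as a property of the measure `μ`;
this makes it possible to follow the inequality through products, images and scalings. -/
def PrekopaLeindler {E : Type*} [AddCommGroup E] [Module ℝ E] [MeasurableSpace E]
    (μ : Measure E) (a b : ℝ) : Prop :=
  ∀ ⦃f g h : E → ENNReal⦄, Measurable f → Measurable g → Measurable h →
    (∀ x y, f x ^ a * g y ^ b ≤ h (a • x + b • y)) →
    (∫⁻ x, f x ∂μ) ^ a * (∫⁻ x, g x ∂μ) ^ b ≤ ∫⁻ x, h x ∂μ

variable {a b : ℝ}

theorem prekopaLeindler_volume_real (ha : 0 < a) (hb : 0 < b) (hab : a + b = 1) :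
    PrekopaLeindler (volume : Measure ℝ) a b := by
  intro f g h hf hg hh hfgh
  rcases eq_or_ne (∫⁻ x, f x) 0 with hf₀ | hf₀
  · simp [hf₀, ha]
  rcases eq_or_ne (∫⁻ x, g x) 0 with hg₀ | hg₀
  · simp [hg₀, hb]
  refine le_of_tendsto (ENNReal.Tendsto.mul
    ((tendsto_lintegral_min_natCast hf).ennrpow_const a) (.inl ?_)
    ((tendsto_lintegral_min_natCast hg).ennrpow_const b) (.inl ?_)) (.of_forall fun N => ?_)
  · simp [hf₀, ha, ENNReal.rpow_eq_zero_iff, ha.not_gt]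
  · simp [hg₀, hb, ENNReal.rpow_eq_zero_iff, hb.not_gt]
  have iSup_min_ne_top (u : ℝ → ENNReal) : ⨆ x, min (u x) N ≠ ⊤ :=
    ne_top_of_le_ne_top (ENNReal.natCast_ne_top N) (iSup_le fun _ => min_le_right _ _)
  refine lintegral_rpow_mul_lintegral_rpow_le_of_iSup_ne_top ha hb hab
    (hf.min measurable_const) (hg.min measurable_const) hh (iSup_min_ne_top f)
    (iSup_min_ne_top g) fun x y => le_trans ?_ (hfgh x y)
  gcongr <;> exact min_le_left _ _

section Module

variable {E F : Type*} [AddCommGroup E] [Module ℝ E] [MeasurableSpace E]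
  [AddCommGroup F] [Module ℝ F] [MeasurableSpace F] {μ : Measure E} {ν : Measure F}

theorem prekopaLeindler_dirac (hab : a + b = 1) (x : E) :
    PrekopaLeindler (Measure.dirac x) a b := by
  intro f g h hf hg hh hfgh
  simpa [lintegral_dirac' x hf, lintegral_dirac' x hg, lintegral_dirac' x hh, ← add_smul, hab]
    using hfgh x x

theorem PrekopaLeindler.prod [SFinite ν] (hμ : PrekopaLeindler μ a b)
    (hν : PrekopaLeindler ν a b) : PrekopaLeindler (μ.prod ν) a b := by
  intro f g h hf hg hh hfgh
  simp only [lintegral_prod _ hf.aemeasurable, lintegral_prod _ hg.aemeasurable,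
    lintegral_prod _ hh.aemeasurable]
  refine hμ hf.lintegral_prod_right' hg.lintegral_prod_right' hh.lintegral_prod_right' fun x y => ?_
  exact hν (hf.comp measurable_prodMk_left) (hg.comp measurable_prodMk_left)
    (hh.comp measurable_prodMk_left) fun u v => hfgh (x, u) (y, v)

theorem PrekopaLeindler.map (hμ : PrekopaLeindler μ a b) {e : E →ₗ[ℝ] F} (he : Measurable e) :
    PrekopaLeindler (μ.map e) a b := by
  intro f g h hf hg hh hfgh
  simp only [lintegral_map hf he, lintegral_map hg he, lintegral_map hh he]
  refine hμ (hf.comp he) (hg.comp he) (hh.comp he) fun x y => ?_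
  simpa using hfgh (e x) (e y)

theorem PrekopaLeindler.smul (hμ : PrekopaLeindler μ a b) (ha : 0 ≤ a) (hb : 0 ≤ b)
    (hab : a + b = 1) (c : ENNReal) : PrekopaLeindler (c • μ) a b := by
  intro f g h hf hg hh hfgh
  simp only [lintegral_smul_measure, smul_eq_mul]
  calc (c * ∫⁻ x, f x ∂μ) ^ a * (c * ∫⁻ x, g x ∂μ) ^ b
      = c ^ a * c ^ b * ((∫⁻ x, f x ∂μ) ^ a * (∫⁻ x, g x ∂μ) ^ b) := by
        rw [ENNReal.mul_rpow_of_nonneg _ _ ha, ENNReal.mul_rpow_of_nonneg _ _ hb, mul_mul_mul_comm]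
    _ ≤ c * ∫⁻ x, h x ∂μ := by
        rw [rpow_mul_rpow_self ha hb hab]
        gcongr
        exact hμ hf hg hh hfgh

theorem PrekopaLeindler.setLIntegral (hμ : PrekopaLeindler μ a b) (ha : 0 < a) (hb : 0 < b)
    {A B : Set E} (hA : MeasurableSet A) (hB : MeasurableSet B)
    (hAB : MeasurableSet (a • A + b • B)) {f g h : E → ENNReal} (hf : Measurable f)
    (hg : Measurable g) (hh : Measurable h)
    (hfgh : ∀ x ∈ A, ∀ y ∈ B, f x ^ a * g y ^ b ≤ h (a • x + b • y)) :
    (∫⁻ x in A, f x ∂μ) ^ a * (∫⁻ x in B, g x ∂μ) ^ b ≤ ∫⁻ x in a • A + b • B, h x ∂μ := by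
  simp only [← lintegral_indicator, hA, hB, hAB]
  refine hμ (hf.indicator hA) (hg.indicator hB) (hh.indicator hAB) fun x y => ?_
  by_cases hx : x ∈ A
  · by_cases hy : y ∈ B
    · have hxy : a • x + b • y ∈ a • A + b • B :=
        add_mem_add (smul_mem_smul_set hx) (smul_mem_smul_set hy)
      simpa only [indicator_of_mem, hx, hy, hxy] using hfgh x hx y hy
    · simp [hy, hb]
  · simp [hx, ha]

end Module

section Normed

variable {E F : Type*} [NormedAddCommGroup E] [NormedSpace ℝ E] [MeasurableSpace E] [BorelSpace E]
  [NormedAddCommGroup F] [NormedSpace ℝ F] [MeasurableSpace F] [BorelSpace F]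

theorem PrekopaLeindler.of_continuousLinearEquiv [FiniteDimensional ℝ F] {μ : Measure E}
    [μ.IsAddHaarMeasure] (hμ : PrekopaLeindler μ a b) (ha : 0 ≤ a) (hb : 0 ≤ b)
    (hab : a + b = 1) (e : E ≃L[ℝ] F) (ν : Measure F) [ν.IsAddHaarMeasure] :
    PrekopaLeindler ν a b := by
  have := FiniteDimensional.proper_real F
  rw [Measure.isAddLeftInvariant_eq_smul ν (μ.map e)]
  exact (hμ.map (e := e.toLinearEquiv.toLinearMap) e.continuous.measurable).smul ha hb hab _

theorem prekopaLeindler_volume_pi (ha : 0 < a) (hb : 0 < b) (hab : a + b = 1) (n : ℕ) :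
    PrekopaLeindler (volume : Measure (Fin n → ℝ)) a b := by
  induction n with
  | zero =>
    rw [volume_pi, Measure.pi_of_empty _ default]
    exact prekopaLeindler_dirac hab _
  | succ n ih =>
    have e : (ℝ × (Fin n → ℝ)) ≃L[ℝ] (Fin (n + 1) → ℝ) :=
      .ofFinrankEq (by simp [add_comm])
    exact ((prekopaLeindler_volume_real ha hb hab).prod ih).of_continuousLinearEquiv
      ha.le hb.le hab e volume

theorem prekopaLeindler_of_isAddHaarMeasure [FiniteDimensional ℝ E] (μ : Measure E)
    [μ.IsAddHaarMeasure] (ha : 0 < a) (hb : 0 < b) (hab : a + b = 1) : PrekopaLeindler μ a b :=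
  (prekopaLeindler_volume_pi ha hb hab (Module.finrank ℝ E)).of_continuousLinearEquiv
    ha.le hb.le hab (.ofFinrankEq (by simp)) μ

end Normed

end PrekopaLeindler

section Sigmoid

theorem sigmoid_rpow_mul_sigmoid_rpow_lt {a b : ℝ} (ha : 0 < a) (hb : 0 < b) (hab : a + b = 1)
    {s t : ℝ} (hst : s ≠ t) :
    s.sigmoid ^ a * t.sigmoid ^ b < (a * s + b * t).sigmoid := by
  set P := s.sigmoid ^ a * t.sigmoid ^ b with hP
  have hneg : (-s).sigmoid ^ a * (-t).sigmoid ^ b = P * Real.exp (-(a * s + b * t)) := by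
    rw [← Real.sigmoid_mul_rexp_neg, ← Real.sigmoid_mul_rexp_neg,
      Real.mul_rpow (Real.sigmoid_nonneg s) (Real.exp_pos _).le,
      Real.mul_rpow (Real.sigmoid_nonneg t) (Real.exp_pos _).le, ← Real.exp_mul, ← Real.exp_mul,
      mul_mul_mul_comm, ← Real.exp_add, hP]
    ring_nf
  have hlt : P < a * s.sigmoid + b * t.sigmoid :=
    (Real.geom_mean_lt_arith_mean2_weighted_iff_of_pos ha hb (Real.sigmoid_nonneg s)
      (Real.sigmoid_nonneg t) hab).2 (Real.sigmoid_injective.ne hst)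
  have hle : (-s).sigmoid ^ a * (-t).sigmoid ^ b ≤ a * (-s).sigmoid + b * (-t).sigmoid :=
    Real.geom_mean_le_arith_mean2_weighted ha.le hb.le (Real.sigmoid_nonneg _)
      (Real.sigmoid_nonneg _) hab
  rw [hneg, Real.sigmoid_neg, Real.sigmoid_neg] at hle
  rw [Real.sigmoid_def, ← one_div, lt_div_iff₀ (by positivity)]
  linarith

theorem exists_one_lt_sigmoid_rpow_mul_rpow_le {a b : ℝ} (ha : 0 < a) (hb : 0 < b)
    (hab : a + b = 1) {S T : Set ℝ} (hS : IsCompact S) (hT : IsCompact T) (hST : Disjoint S T) :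
    ∃ m : ℝ, 1 < m ∧
      ∀ s ∈ S, ∀ t ∈ T, s.sigmoid ^ a * (m * t.sigmoid) ^ b ≤ (a * s + b * t).sigmoid := by
  have hpos : ∀ p : ℝ × ℝ, 0 < p.1.sigmoid ^ a * p.2.sigmoid ^ b := fun p =>
    mul_pos (Real.rpow_pos_of_pos (Real.sigmoid_pos _) a)
      (Real.rpow_pos_of_pos (Real.sigmoid_pos _) b)
  have hcont : Continuous fun p : ℝ × ℝ =>
      (a * p.1 + b * p.2).sigmoid / (p.1.sigmoid ^ a * p.2.sigmoid ^ b) := by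
    have hσ : Continuous Real.sigmoid := continuous_sigmoid
    exact (hσ.comp (by fun_prop)).div
      (((hσ.comp continuous_fst).rpow_const fun _ => .inr ha.le).mul
        ((hσ.comp continuous_snd).rpow_const fun _ => .inr hb.le)) fun p => (hpos p).ne'
  obtain ⟨r, hr, hle⟩ := (hS.prod hT).exists_forall_le' hcont.continuousOn (a := 1)
    fun p hp => (one_lt_div (hpos p)).2
      (sigmoid_rpow_mul_sigmoid_rpow_lt ha hb hab (hST.ne_of_mem hp.1 hp.2))
  have hr₀ : 0 < r := one_pos.trans hr
  refine ⟨r ^ b⁻¹, Real.one_lt_rpow hr (inv_pos.2 hb), fun s hs t ht => ?_⟩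
  calc s.sigmoid ^ a * (r ^ b⁻¹ * t.sigmoid) ^ b = r * (s.sigmoid ^ a * t.sigmoid ^ b) := by
        rw [Real.mul_rpow (Real.rpow_nonneg hr₀.le _) (Real.sigmoid_nonneg t),
          Real.rpow_inv_rpow hr₀.le hb.ne', mul_left_comm]
    _ ≤ (a * s + b * t).sigmoid := (le_div_iff₀ (hpos (s, t))).1 (hle (s, t) ⟨hs, ht⟩)

theorem sigmoid_rpow_mul_sigmoid_rpow_le {a b : ℝ} (ha : 0 < a) (hb : 0 < b) (hab : a + b = 1)
    (s t : ℝ) : s.sigmoid ^ a * t.sigmoid ^ b ≤ (a * s + b * t).sigmoid := by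
  rcases eq_or_ne s t with rfl | hst
  · rw [← Real.rpow_add (Real.sigmoid_pos s), ← add_mul, hab, Real.rpow_one, one_mul]
  · exact (sigmoid_rpow_mul_sigmoid_rpow_lt ha hb hab hst).le

theorem exists_sigmoid_le_of_subset_Iio {a b : ℝ} (ha : 0 < a) (hb : 0 < b) (hab : a + b = 1)
    {S T : Set ℝ} (hS : IsCompact S) (hT : IsCompact T) {c : ℝ} (hSc : S ⊆ Iio c) :
    ∃ w : ℝ → ℝ, Measurable w ∧ (∀ t, t.sigmoid ≤ w t) ∧ (∀ t, c ≤ t → t.sigmoid < w t) ∧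
      ∀ s ∈ S, ∀ t ∈ T, s.sigmoid ^ a * w t ^ b ≤ (a * s + b * t).sigmoid := by
  have hdisj : Disjoint S (T ∩ Ici c) :=
    disjoint_left.2 fun _ hs hsT => (mem_Iio.1 (hSc hs)).not_ge hsT.2
  obtain ⟨m, hm, hgain⟩ :=
    exists_one_lt_sigmoid_rpow_mul_rpow_le ha hb hab hS (hT.inter_right isClosed_Ici) hdisj
  have hlt : ∀ t : ℝ, t.sigmoid < m * t.sigmoid := fun t =>
    lt_mul_of_one_lt_left (Real.sigmoid_pos t) hm
  refine ⟨(Ici c).piecewise (fun t => m * t.sigmoid) Real.sigmoid,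
    .piecewise measurableSet_Ici (continuous_sigmoid.measurable.const_mul m)
      continuous_sigmoid.measurable, fun t => ?_, fun t ht => ?_, fun s hs t ht => ?_⟩
  · by_cases htc : t ∈ Ici c
    · simpa only [piecewise_eq_of_mem _ _ _ htc] using (hlt t).le
    · exact (piecewise_eq_of_notMem _ _ _ htc).ge
  · simpa only [piecewise_eq_of_mem _ _ _ (mem_Ici.2 ht)] using hlt t
  · by_cases htc : t ∈ Ici c
    · simpa only [piecewise_eq_of_mem _ _ _ htc] using hgain s hs t ⟨ht, htc⟩
    · simpa only [piecewise_eq_of_notMem _ _ _ htc] using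
        sigmoid_rpow_mul_sigmoid_rpow_le ha hb hab s t

theorem setLIntegral_sigmoid_eq_half {E : Type*} [AddGroup E] [MeasurableSpace E]
    [MeasurableNeg E] {μ : Measure E} [μ.IsNegInvariant] {A : Set E} (hA : MeasurableSet A)
    (hA_neg : -A = A) {φ : E → ℝ} (hφ : Measurable φ) (hφ_odd : φ.Odd) :
    ∫⁻ x in A, ENNReal.ofReal (φ x).sigmoid ∂μ = μ A / 2 := by
  have hmeas : Measurable fun x => ENNReal.ofReal (φ x).sigmoid :=
    (continuous_sigmoid.measurable.comp hφ).ennreal_ofReal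
  have hreflect : ∫⁻ x in A, ENNReal.ofReal (-φ x).sigmoid ∂μ
      = ∫⁻ x in A, ENNReal.ofReal (φ x).sigmoid ∂μ := by
    simpa only [← image_neg_eq_neg, hA_neg, neg_preimage, hφ_odd _] using
      (Measure.measurePreserving_neg μ).setLIntegral_comp_preimage hA hmeas
  rw [ENNReal.eq_div_iff two_ne_zero ENNReal.ofNat_ne_top, two_mul]
  nth_rewrite 2 [← hreflect]
  rw [← lintegral_add_left hmeas]
  have hsum : ∀ t : ℝ, ENNReal.ofReal t.sigmoid + ENNReal.ofReal (-t).sigmoid = 1 := fun t => by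
    rw [← ENNReal.ofReal_add (Real.sigmoid_nonneg _) (Real.sigmoid_nonneg _), Real.sigmoid_neg,
      add_sub_cancel, ENNReal.ofReal_one]
  simp only [hsum, setLIntegral_one]

end Sigmoid

section StrictBrunnMinkowski

variable {E : Type*} [NormedAddCommGroup E] [NormedSpace ℝ E] [FiniteDimensional ℝ E]
  [MeasurableSpace E] [BorelSpace E] (μ : Measure E) [μ.IsAddHaarMeasure]

theorem measure_inter_ne_zero_of_convex {s U : Set E} (hs : Convex ℝ s) (hs₀ : μ s ≠ 0)
    (hU : IsOpen U) (hsU : (s ∩ U).Nonempty) : μ (s ∩ U) ≠ 0 := by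
  obtain ⟨x, hxs, hxU⟩ := hsU
  have hint : (interior s).Nonempty := nonempty_of_measure_ne_zero <| by
    rwa [measure_interior_of_null_frontier (hs.addHaar_frontier μ)]
  have hx : x ∈ closure (interior s) := by
    rw [hs.closure_interior_eq_closure_of_nonempty_interior hint]
    exact subset_closure hxs
  have hne : (interior s ∩ U).Nonempty := by
    rw [inter_comm]
    exact mem_closure_iff.1 hx U hU hxU
  exact ((isOpen_interior.inter hU).measure_pos μ hne).trans_le
    (measure_mono (inter_subset_inter_left U interior_subset)) |>.ne'

variable {a b : ℝ} {A B : Set E}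

theorem exists_setLIntegral_sigmoid_lt_of_not_subset (ha : 0 < a) (hb : 0 < b) (hab : a + b = 1)
    (hA : IsCompact A) (hB : IsCompact B) (hA_conv : Convex ℝ A) (hB_conv : Convex ℝ B)
    (hB₀ : μ B ≠ 0) (hBA : ¬ B ⊆ A) :
    ∃ (φ : E →L[ℝ] ℝ) (g : E → ENNReal), Measurable g ∧
      (∀ x ∈ A, ∀ y ∈ B, ENNReal.ofReal (φ x).sigmoid ^ a * g y ^ b ≤
        ENNReal.ofReal (φ (a • x + b • y)).sigmoid) ∧
      ∫⁻ y in B, ENNReal.ofReal (φ y).sigmoid ∂μ < ∫⁻ y in B, g y ∂μ := by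
  obtain ⟨q, hqB, hqA⟩ := not_subset.1 hBA
  obtain ⟨φ, c, hφA, hφq⟩ := geometric_hahn_banach_closed_point hA_conv hA.isClosed hqA
  obtain ⟨w, hw, hσw, hσw_lt, hmul⟩ := exists_sigmoid_le_of_subset_Iio ha hb hab
    (hA.image φ.continuous) (hB.image φ.continuous) (image_subset_iff.2 hφA)
  have hw₀ : ∀ t, 0 ≤ w t := fun t => (Real.sigmoid_nonneg t).trans (hσw t)
  have hg : Measurable fun y => ENNReal.ofReal (w (φ y)) :=
    (hw.comp φ.measurable).ennreal_ofReal
  refine ⟨φ, fun y => ENNReal.ofReal (w (φ y)), hg, fun x hx y hy => ?_, ?_⟩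
  · rw [ENNReal.ofReal_rpow_of_nonneg (Real.sigmoid_nonneg _) ha.le,
      ENNReal.ofReal_rpow_of_nonneg (hw₀ _) hb.le,
      ← ENNReal.ofReal_mul (Real.rpow_nonneg (Real.sigmoid_nonneg _) _)]
    refine ENNReal.ofReal_le_ofReal ?_
    simpa using hmul _ (mem_image_of_mem φ hx) _ (mem_image_of_mem φ hy)
  · have hcap : IsOpen {y | c < φ y} := isOpen_lt continuous_const φ.continuous
    have hfin : ∫⁻ y in B, ENNReal.ofReal (φ y).sigmoid ∂μ ≠ ⊤ :=
      (setLIntegral_lt_top_of_le_nnreal hB.measure_ne_top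
        ⟨1, fun y _ => by simpa using Real.sigmoid_le_one (φ y)⟩).ne
    refine lintegral_strict_mono_of_ae_le_of_ae_lt_on (s := {y | c < φ y}) hg.aemeasurable hfin
      (.of_forall fun y => ENNReal.ofReal_le_ofReal (hσw _)) ?_ (.of_forall fun y hy => ?_)
    · rw [Measure.restrict_apply hcap.measurableSet, inter_comm]
      exact measure_inter_ne_zero_of_convex μ hB_conv hB₀ hcap ⟨q, hqB, hφq⟩
    · exact (ENNReal.ofReal_lt_ofReal_iff_of_nonneg (Real.sigmoid_nonneg _)).2
        (hσw_lt _ (le_of_lt hy))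

theorem measure_rpow_mul_measure_rpow_lt_of_not_subset (ha : 0 < a) (hb : 0 < b)
    (hab : a + b = 1) (hA : IsCompact A) (hB : IsCompact B) (hA_conv : Convex ℝ A)
    (hB_conv : Convex ℝ B) (hA_neg : -A = A) (hB_neg : -B = B) (hA₀ : μ A ≠ 0) (hB₀ : μ B ≠ 0)
    (hBA : ¬ B ⊆ A) : μ A ^ a * μ B ^ b < μ (a • A + b • B) := by
  obtain ⟨φ, g, hg, hmul, hlt⟩ :=
    exists_setLIntegral_sigmoid_lt_of_not_subset μ ha hb hab hA hB hA_conv hB_conv hB₀ hBA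
  have hAB : MeasurableSet (a • A + b • B) := ((hA.smul a).add (hB.smul b)).measurableSet
  have hσφ : Measurable fun x => ENNReal.ofReal (φ x).sigmoid :=
    (continuous_sigmoid.measurable.comp φ.measurable).ennreal_ofReal
  have half : ∀ {S : Set E}, MeasurableSet S → -S = S →
      ∫⁻ x in S, ENNReal.ofReal (φ x).sigmoid ∂μ = μ S / 2 := fun hS hS_neg =>
    setLIntegral_sigmoid_eq_half hS hS_neg φ.measurable (map_neg φ)
  have hPL := (prekopaLeindler_of_isAddHaarMeasure μ ha hb hab).setLIntegral ha hb
    hA.measurableSet hB.measurableSet hAB hσφ hg hσφ hmul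
  have hAB_neg : -(a • A + b • B) = a • A + b • B := by
    simp only [neg_add, ← smul_set_neg, hA_neg, hB_neg]
  rw [half hA.measurableSet hA_neg, half hAB hAB_neg] at hPL
  rw [half hB.measurableSet hB_neg] at hlt
  refine (ENNReal.div_lt_div_iff_left two_ne_zero ENNReal.ofNat_ne_top).1 ?_
  calc μ A ^ a * μ B ^ b / 2 = (μ A / 2) ^ a * (μ B / 2) ^ b := by
        rw [div_rpow_mul_div_rpow ha.le hb.le two_ne_zero ENNReal.ofNat_ne_top,
          rpow_mul_rpow_self ha.le hb.le hab]
    _ < (μ A / 2) ^ a * (∫⁻ y in B, g y ∂μ) ^ b := by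
        refine (ENNReal.mul_lt_mul_iff_right ?_ ?_).2 (ENNReal.rpow_lt_rpow hlt hb)
        · simp [ENNReal.rpow_eq_zero_iff, hA₀, ha.le]
        · exact ENNReal.rpow_ne_top_of_nonneg ha.le
            (ENNReal.div_ne_top hA.measure_ne_top two_ne_zero)
    _ ≤ μ (a • A + b • B) / 2 := hPL

theorem measure_rpow_mul_measure_rpow_lt_of_ne (ha : 0 < a) (hb : 0 < b)
    (hab : a + b = 1) (hA : IsCompact A) (hB : IsCompact B) (hA_conv : Convex ℝ A)
    (hB_conv : Convex ℝ B) (hA_neg : -A = A) (hB_neg : -B = B) (hA₀ : μ A ≠ 0) (hB₀ : μ B ≠ 0)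
    (hne : A ≠ B) : μ A ^ a * μ B ^ b < μ (a • A + b • B) := by
  by_cases hBA : B ⊆ A
  · have hAB : ¬ A ⊆ B := fun hAB => hne (hAB.antisymm hBA)
    rw [mul_comm, add_comm (a • A)]
    exact measure_rpow_mul_measure_rpow_lt_of_not_subset μ hb ha (by rwa [add_comm]) hB hA
      hB_conv hA_conv hB_neg hA_neg hB₀ hA₀ hAB
  · exact measure_rpow_mul_measure_rpow_lt_of_not_subset μ ha hb hab hA hB hA_conv hB_conv
      hA_neg hB_neg hA₀ hB₀ hBA

end StrictBrunnMinkowski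

section CentredInter

/-- The intersection `K ∩ (x + K)`, translated by `-x / 2`; for `K = -K` this makes it symmetric
about the origin, whatever `x` is. -/
def centredInter {E : Type*} [AddCommGroup E] [Module ℝ E] (K : Set E) (x : E) : Set E :=
  {v | v + (2⁻¹ : ℝ) • x ∈ K ∧ v - (2⁻¹ : ℝ) • x ∈ K}

section Module

variable {E : Type*} [AddCommGroup E] [Module ℝ E] {K : Set E}

theorem measure_centredInter [MeasurableSpace E] [MeasurableAdd E] (μ : Measure E)
    [μ.IsAddRightInvariant] (K : Set E) (x : E) :
    μ (centredInter K x) = μ (K ∩ (fun z => x + z) '' K) := by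
  rw [← measure_preimage_add_right μ ((2⁻¹ : ℝ) • x) (K ∩ (fun z => x + z) '' K)]
  congr 1
  ext v
  have hv : -x + (v + (2⁻¹ : ℝ) • x) = v - (2⁻¹ : ℝ) • x := by module
  simp only [centredInter, mem_ofPred_eq, preimage_inter, mem_inter_iff, mem_preimage,
    image_add_left, hv]

theorem neg_centredInter (hK : K = -K) (x : E) : -centredInter K x = centredInter K x := by
  have hneg : ∀ z, -z ∈ K ↔ z ∈ K := fun z => by rw [← mem_neg, ← hK]
  ext v
  rw [mem_neg, centredInter, mem_ofPred_eq, mem_ofPred_eq, and_comm, ← hneg (v + _),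
    ← hneg (v - _), neg_add', neg_sub', sub_neg_eq_add]

variable {a b : ℝ}

theorem smul_centredInter_add_smul_centredInter_subset (hK : Convex ℝ K) (ha : 0 ≤ a)
    (hb : 0 ≤ b) (hab : a + b = 1) (x y : E) :
    a • centredInter K x + b • centredInter K y ⊆ centredInter K (a • x + b • y) := by
  rintro _ ⟨_, ⟨p, hp, rfl⟩, _, ⟨q, hq, rfl⟩, rfl⟩
  constructor
  · convert hK hp.1 hq.1 ha hb hab using 1
    module
  · convert hK hp.2 hq.2 ha hb hab using 1
    module

theorem convex_centredInter (hK : Convex ℝ K) (x : E) : Convex ℝ (centredInter K x) := by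
  refine convex_iff_pointwise_add_subset.2 fun a b ha hb hab => ?_
  simpa [← add_smul, hab] using
    smul_centredInter_add_smul_centredInter_subset hK ha hb hab x x

theorem vadd_centredInter_subset_of_eq (hK : Convex ℝ K) (ha : 0 ≤ a) (hb : 0 ≤ b)
    (hab : a + b = 1) {x y : E} (hxy : centredInter K x = centredInter K y) :
    ((a * b / 2) • (y - x)) +ᵥ centredInter K x ⊆ centredInter K (a • x + b • y) := by
  rintro _ ⟨p, hp, rfl⟩
  have hq : p ∈ centredInter K y := hxy ▸ hp
  obtain rfl : a = 1 - b := by linarith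
  constructor
  · convert hK hp.1 hq.1 (a := 1 - (b + (1 - b) * b)) (b := b + (1 - b) * b)
      (by nlinarith) (by nlinarith) (by ring) using 1
    simp only [vadd_eq_add]
    module
  · convert hK hp.2 hq.2 (a := 1 - (b - (1 - b) * b)) (b := b - (1 - b) * b)
      (by nlinarith) (by nlinarith) (by ring) using 1
    simp only [vadd_eq_add]
    module

end Module

section Normed

variable {E : Type*} [NormedAddCommGroup E] [NormedSpace ℝ E] {K : Set E}

theorem isCompact_centredInter (hK : IsCompact K) (x : E) : IsCompact (centredInter K x) :=
  ((Homeomorph.addRight ((2⁻¹ : ℝ) • x)).isCompact_preimage.2 hK).inter_right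
    (hK.isClosed.preimage (continuous_sub_right ((2⁻¹ : ℝ) • x)))

theorem not_vadd_subset_self_of_isCompact {A : Set E} (hA : IsCompact A) (hA₀ : A.Nonempty) {v : E}
    (hv : v ≠ 0) : ¬ v +ᵥ A ⊆ A := by
  intro hvA
  obtain ⟨φ, hφ⟩ := SeparatingDual.exists_eq_one (R := ℝ) hv
  obtain ⟨p, hp, hmax⟩ := hA.exists_isMaxOn hA₀ φ.continuous.continuousOn
  have := hmax (hvA (vadd_mem_vadd_set hp))
  simp only [vadd_eq_add, mem_ofPred_eq, map_add, hφ] at this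
  linarith

variable [FiniteDimensional ℝ E] [MeasurableSpace E] [BorelSpace E] (μ : Measure E)
  [μ.IsAddHaarMeasure]

theorem isOpen_setOf_lt_measure_centredInter (hK : Convex ℝ K) (δ : ENNReal) :
    IsOpen {x | δ < μ (centredInter K x)} := by
  refine isOpen_iff_mem_nhds.2 fun x hx => ?_
  rw [mem_ofPred_eq, ← measure_interior_of_null_frontier
    ((convex_centredInter hK x).addHaar_frontier μ)] at hx
  obtain ⟨L, hLx, hL, hδL⟩ := isOpen_interior.exists_lt_isCompact hx
  have hLy : ∀ᶠ y in nhds x, ∀ v ∈ L, v ∈ centredInter K y := by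
    refine hL.eventually_forall_of_forall_eventually fun v hv => ?_
    have hv_nhds : centredInter K x ∈ nhds v := mem_interior_iff_mem_nhds.1 (hLx hv)
    have hadd : Filter.Tendsto (fun p : E × E => p.2 + (2⁻¹ : ℝ) • (p.1 - x)) (nhds (x, v))
        (nhds v) := Continuous.tendsto' (by fun_prop) _ _ (by simp)
    have hsub : Filter.Tendsto (fun p : E × E => p.2 - (2⁻¹ : ℝ) • (p.1 - x)) (nhds (x, v))
        (nhds v) := Continuous.tendsto' (by fun_prop) _ _ (by simp)
    filter_upwards [hadd hv_nhds, hsub hv_nhds] with p hp_add hp_sub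
    constructor
    · convert hp_add.1 using 1
      module
    · convert hp_sub.2 using 1
      module
  exact hLy.mono fun y hy => hδL.trans_le (measure_mono hy)

theorem lt_measure_centredInter (hK : IsCompact K) (hK_conv : Convex ℝ K) (hK_neg : K = -K)
    {δ : ENNReal} (hδ : 0 < δ) {x y : E} (hxy : x ≠ y) (hx : δ ≤ μ (centredInter K x))
    (hy : δ ≤ μ (centredInter K y)) {a b : ℝ} (ha : 0 < a) (hb : 0 < b) (hab : a + b = 1) :
    δ < μ (centredInter K (a • x + b • y)) := by
  set z := a • x + b • y
  have strict : ∀ {u v : E}, δ ≤ μ (centredInter K u) → δ ≤ μ (centredInter K v) →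
      centredInter K u ≠ centredInter K v →
      a • centredInter K u + b • centredInter K v ⊆ centredInter K z →
      δ < μ (centredInter K z) := by
    intro u v hu hv hne hsub
    calc δ = δ ^ a * δ ^ b := (rpow_mul_rpow_self ha.le hb.le hab δ).symm
      _ ≤ μ (centredInter K u) ^ a * μ (centredInter K v) ^ b := by gcongr
      _ < μ (a • centredInter K u + b • centredInter K v) :=
        measure_rpow_mul_measure_rpow_lt_of_ne μ ha hb hab (isCompact_centredInter hK u)
          (isCompact_centredInter hK v) (convex_centredInter hK_conv u)
          (convex_centredInter hK_conv v) (neg_centredInter hK_neg u) (neg_centredInter hK_neg v)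
          (hδ.trans_le hu).ne' (hδ.trans_le hv).ne' hne
      _ ≤ μ (centredInter K z) := measure_mono hsub
  have hsub := smul_centredInter_add_smul_centredInter_subset hK_conv ha.le hb.le hab x y
  by_cases hCxy : centredInter K x = centredInter K y
  · have hxz : centredInter K x ⊆ centredInter K z := by
      rw [← hCxy] at hsub
      refine Subset.trans (fun p hp => ?_) hsub
      exact ⟨a • p, smul_mem_smul_set hp, b • p, smul_mem_smul_set hp, by
        simp [← add_smul, hab]⟩
    have hzx : centredInter K x ≠ centredInter K z := fun h => by
      refine not_vadd_subset_self_of_isCompact (isCompact_centredInter hK x)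
        (nonempty_of_measure_ne_zero (hδ.trans_le hx).ne') (v := (a * b / 2) • (y - x))
        (smul_ne_zero (by positivity) (sub_ne_zero.2 hxy.symm)) ?_
      exact (vadd_centredInter_subset_of_eq hK_conv ha.le hb.le hab hCxy).trans h.ge
    refine strict hx (hx.trans (measure_mono hxz)) hzx ?_
    exact (add_subset_add_right (smul_set_mono hxz)).trans
      (convex_iff_pointwise_add_subset.1 (convex_centredInter hK_conv z) ha.le hb.le hab)
  · exact strict hx hy hCxy hsub

theorem stmt_3_general (hK : IsCompact K) (hK_conv : Convex ℝ K) (hK_neg : K = -K)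
    {δ : ENNReal} (hδ : 0 < δ) : StrictConvex ℝ {x | δ ≤ μ (K ∩ (fun z => x + z) '' K)} := by
  simp only [← measure_centredInter]
  intro x hx y hy hxy a b ha hb hab
  have hsub : {u | δ < μ (centredInter K u)} ⊆ {u | δ ≤ μ (centredInter K u)} :=
    ofPred_subset_ofPred.2 fun _ => le_of_lt
  exact interior_maximal hsub (isOpen_setOf_lt_measure_centredInter μ hK_conv δ)
    (lt_measure_centredInter μ hK hK_conv hK_neg hδ hxy hx hy ha hb hab)

end Normed

end CentredInter

/-- The convolution body `K(δ) = {x : vol (K ∩ (x + K)) ≥ δ}` of a symmetric convex body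
is strictly convex. -/
theorem stmt_3 (n : ℕ) (K : Set (EuclideanSpace ℝ (Fin n)))
    (hKcomp : IsCompact K) (hKconv : Convex ℝ K) (hKint : (interior K).Nonempty)
    (hKsymm : K = -K)
    (δ : ENNReal) (hδ0 : 0 < δ) (hδ : δ < volume K) :
    StrictConvex ℝ {x : EuclideanSpace ℝ (Fin n) |
      δ ≤ volume (K ∩ (fun z => x + z) '' K)} :=
  stmt_3_general volume hKcomp hKconv hKsymm hδ0
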